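/- Let $\mu$ be a centred Gaussian Borel measure on a separable Banach space $\mathbb{B}$, and let $K, L \subseteq \mathbb{B}$ be closed, convex, symmetric sets. Then $\mu(K \cap L) \ge \mu(K)\,\mu(L)$. -/

import Mathlib

open MeasureTheory ProbabilityTheory

namespace GCI
open Matrix
open scoped MatrixOrder

variable {n m : Type*} [Fintype n] [DecidableEq n] [Fintype m] [DecidableEq m]

lemma one_le_det_one_add {S : Matrix n n ℝ} (hS : S.PosSemidef) : 1 ≤ (1 + S).det := by
  have h1 : (1 + S).det = ∏ i, (1 + hS.1.eigenvalues i) := by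
    have h := congrArg (Polynomial.eval (-1 : ℝ)) hS.1.charpoly_eq
    rw [Matrix.eval_charpoly, Polynomial.eval_prod] at h
    have e : (Matrix.scalar n (-1 : ℝ) - S) = -(1 + S) := by
      rw [map_neg, map_one]; abel
    rw [e, Matrix.det_neg] at h
    simp only [Polynomial.eval_sub, Polynomial.eval_X, Polynomial.eval_C, RCLike.ofReal_real_eq_id, id] at h
    have e2 : ∏ i, (-1 - hS.1.eigenvalues i) = (-1) ^ Fintype.card n * ∏ i, (1 + hS.1.eigenvalues i) := by
      rw [← Finset.card_univ, ← Finset.prod_const, ← Finset.prod_mul_distrib]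
      refine Finset.prod_congr rfl fun i _ => by ring
    rw [e2] at h
    exact mul_left_cancel₀ (pow_ne_zero _ (by norm_num)) h
  rw [h1]
  calc (1:ℝ) = ∏ i : n, 1 := by simp
    _ ≤ _ := Finset.prod_le_prod (fun _ _ => zero_le_one)
      (fun i _ => by linarith [hS.eigenvalues_nonneg i])

lemma det_le_det_add {P R : Matrix n n ℝ} (hP : P.PosSemidef) (hR : R.PosSemidef) :
    P.det ≤ (P + R).det := by
  by_cases h0 : P.det = 0
  · rw [h0]; exact (hP.add hR).det_nonneg
  set T := CFC.sqrt P with hT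
  have hTT : T * T = P := CFC.sqrt_mul_sqrt_self _ hP.nonneg
  have hTs : Tᴴ = T := ((CFC.sqrt_nonneg P).isSelfAdjoint)
  have hdet : T.det * T.det = P.det := by rw [← det_mul, hTT]
  have hTu : IsUnit T.det := by
    rw [isUnit_iff_ne_zero]; intro h; rw [h] at hdet; apply h0; rw [← hdet]; simp
  have e : P + R = T * (1 + T⁻¹ * R * T⁻¹) * T := by
    rw [mul_add, add_mul, mul_one, hTT]
    congr 1
    rw [← mul_assoc, ← mul_assoc, mul_nonsing_inv _ hTu, one_mul, mul_assoc, nonsing_inv_mul _ hTu, mul_one]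
  have hS : (T⁻¹ * R * T⁻¹).PosSemidef := by
    have := hR.conjTranspose_mul_mul_same T⁻¹
    rwa [conjTranspose_nonsing_inv, hTs] at this
  rw [e, det_mul, det_mul]
  have := one_le_det_one_add hS
  have hp := hP.det_nonneg
  nlinarith

/-- interpolated block matrix -/
def blk (A : Matrix n n ℝ) (B : Matrix n m ℝ) (D : Matrix m m ℝ) (t : ℝ) :
    Matrix (n ⊕ m) (n ⊕ m) ℝ := fromBlocks A (t • B) (t • Bᵀ) D

lemma blk_psd {A : Matrix n n ℝ} {B : Matrix n m ℝ} {D : Matrix m m ℝ}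
    (h : (blk A B D 1).PosSemidef) {t : ℝ} (h0 : 0 ≤ t) (h1 : t ≤ 1) : (blk A B D t).PosSemidef := by
  have hm : (blk A B D (-1)).PosSemidef := by
    have := h.conjTranspose_mul_mul_same (fromBlocks 1 0 0 (-1) : Matrix (n ⊕ m) (n ⊕ m) ℝ)
    convert this using 1
    rw [fromBlocks_conjTranspose]
    simp only [blk, fromBlocks_multiply]
    simp
  have e : blk A B D t = ((1 + t) / 2) • blk A B D 1 + ((1 - t) / 2) • blk A B D (-1) := by
    simp only [blk, fromBlocks_smul, fromBlocks_add, smul_smul, ← add_smul]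
    congr 1
    · rw [show (1 + t) / 2 + (1 - t) / 2 = 1 by ring, one_smul]
    · congr 1; ring
    · congr 1; ring
    · rw [show (1 + t) / 2 + (1 - t) / 2 = 1 by ring, one_smul]
  rw [e]
  exact (h.smul (by linarith)).add (hm.smul (by linarith))

lemma det_blk_antitone {A : Matrix n n ℝ} {B : Matrix n m ℝ} {D : Matrix m m ℝ}
    (h : (blk A B D 1).PosSemidef) {s t : ℝ} (h0 : 0 ≤ s) (hst : s ≤ t) (h1 : t ≤ 1) :
    (blk A B D t).det ≤ (blk A B D s).det := by
  have hA : A.PosSemidef := by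
    have := h.submatrix (Sum.inl : n → n ⊕ m)
    exact this
  by_cases hA0 : A.det = 0
  · have key : (blk A B D t).det = 0 := by
      obtain ⟨v, hv, hv0⟩ := exists_mulVec_eq_zero_iff.mpr hA0
      apply exists_mulVec_eq_zero_iff.mp
      refine ⟨Sum.elim v 0, ?_, ?_⟩
      · intro h'; apply hv; ext i; exact congrFun h' (Sum.inl i)
      · rw [← (blk_psd h (h0.trans hst) h1).dotProduct_mulVec_zero_iff]
        simp [blk, fromBlocks_mulVec, hv0, dotProduct, Fintype.sum_sum_type]
    rw [key]
    exact (blk_psd h h0 (hst.trans h1)).det_nonneg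
  have hAp : A.PosDef := hA.posDef_iff_det_ne_zero.mpr hA0
  have : Invertible A := hAp.isUnit.invertible
  have hN : (Bᵀ * A⁻¹ * B).PosSemidef := by
    have := hAp.inv.posSemidef.conjTranspose_mul_mul_same B
    rwa [conjTranspose_eq_transpose_of_trivial] at this
  have hdet : ∀ r : ℝ, (blk A B D r).det = A.det * (D - (r * r) • (Bᵀ * A⁻¹ * B)).det := by
    intro r
    rw [blk, det_fromBlocks₁₁, invOf_eq_nonsing_inv]
    simp [smul_smul]
  have hPt : (D - (t * t) • (Bᵀ * A⁻¹ * B)).PosSemidef := by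
    have := blk_psd h (h0.trans hst) h1
    have e : blk A B D t = fromBlocks A (t • B) (t • B)ᴴ D := by
      simp [blk, conjTranspose_eq_transpose_of_trivial]
    rw [e, PosDef.fromBlocks₁₁ _ _ hAp] at this
    simpa [smul_smul, conjTranspose_eq_transpose_of_trivial] using this
  rw [hdet, hdet]
  refine mul_le_mul_of_nonneg_left ?_ hA.det_nonneg
  have := det_le_det_add hPt (hN.smul (show 0 ≤ t * t - s * s by nlinarith))
  have e : D - (s * s) • (Bᵀ * A⁻¹ * B)
      = D - (t * t) • (Bᵀ * A⁻¹ * B) + (t * t - s * s) • (Bᵀ * A⁻¹ * B) := by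
    rw [sub_smul]; abel
  rw [e]; exact this

/-- coefficient: `det ((1-P) + P C P)` with `P` the coordinate projection to `J`. -/
noncomputable def pj (J : Finset n) : Matrix n n ℝ := diagonal (fun i => if i ∈ J then 1 else 0)

lemma pj_mul (J : Finset n) : pj J * pj J = pj J := by
  simp [pj]

noncomputable def minor (C : Matrix n n ℝ) (J : Finset n) : ℝ :=
  (1 + pj J * (C - 1) * pj J).det

lemma det_expand (C : Matrix n n ℝ) (l : n → ℝ) :
    (1 + diagonal l * C).det = ∑ J : Finset n, (∏ i ∈ J, l i) * minor C J := by
  have h := (detRowAlternating (R := ℝ) (n := n)).toMultilinearMap.map_add_univ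
    (fun i => l i • C i) (fun i => (1 : Matrix n n ℝ) i)
  have e1 : (1 + diagonal l * C).det = (detRowAlternating (R := ℝ) (n := n)).toMultilinearMap
      ((fun i => l i • C i) + (fun i => (1 : Matrix n n ℝ) i)) := by
    rw [add_comm]
    change det _ = det _
    congr 1
    ext i j
    simp [diagonal_mul]
  rw [e1, h]
  refine Finset.sum_congr rfl fun J _ => ?_
  have h2 := (detRowAlternating (R := ℝ) (n := n)).toMultilinearMap.map_piecewise_smul
    l (J.piecewise C (1 : Matrix n n ℝ)) J
  have e2 : J.piecewise (fun i => l i • J.piecewise C (1 : Matrix n n ℝ) i) (J.piecewise C (1 : Matrix n n ℝ))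
     = J.piecewise (fun i => l i • C i) (fun i => (1 : Matrix n n ℝ) i) := by
    ext i j
    by_cases hi : i ∈ J <;> simp [hi, Finset.piecewise]
  rw [e2] at h2
  rw [h2, smul_eq_mul]
  congr 1
  unfold minor
  rw [mul_assoc, det_one_add_mul_comm, mul_assoc, pj_mul, det_one_add_mul_comm]
  change det _ = det _
  congr 1
  ext i j
  by_cases hi : i ∈ J <;> simp [hi, Finset.piecewise, pj, diagonal_mul]

lemma det_one_add_diag_mul {C : Matrix n n ℝ} {l : n → ℝ} (hl : ∀ i, 0 ≤ l i) :
    (1 + diagonal (fun i => √(l i)) * C * diagonal (fun i => √(l i))).det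
      = (1 + diagonal l * C).det := by
  rw [mul_assoc, det_one_add_mul_comm, mul_assoc, diagonal_mul_diagonal, det_one_add_mul_comm]
  simp [Real.mul_self_sqrt, hl]

lemma diag_psd {C : Matrix n n ℝ} (hC : C.PosSemidef) (l : n → ℝ) :
    (diagonal l * C * diagonal l).PosSemidef := by
  have := hC.conjTranspose_mul_mul_same (diagonal l)
  simpa using this

lemma one_le_det {C : Matrix n n ℝ} (hC : C.PosSemidef) {l : n → ℝ} (hl : ∀ i, 0 ≤ l i) :
    1 ≤ (1 + diagonal l * C).det := by
  rw [← det_one_add_diag_mul hl]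
  exact one_le_det_one_add (diag_psd hC _)

lemma minor_blk {A : Matrix n n ℝ} {B : Matrix n m ℝ} {D : Matrix m m ℝ} (J : Finset (n ⊕ m)) :
    ∃ A' B' D', ∀ t, 1 + pj J * (blk A B D t - 1) * pj J = blk A' B' D' t := by
  let d1 : n → ℝ := fun i => if Sum.inl i ∈ J then 1 else 0
  let d2 : m → ℝ := fun i => if Sum.inr i ∈ J then 1 else 0
  have hp : pj J = fromBlocks (diagonal d1) 0 0 (diagonal d2) := by
    rw [pj, fromBlocks_diagonal]; congr 1; ext i; cases i <;> rfl
  refine ⟨1 + diagonal d1 * (A - 1) * diagonal d1, diagonal d1 * B * diagonal d2,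
    1 + diagonal d2 * (D - 1) * diagonal d2, fun t => ?_⟩
  have h1 : (1 : Matrix (n ⊕ m) (n ⊕ m) ℝ) = fromBlocks 1 0 0 1 := fromBlocks_one.symm
  rw [hp, blk, blk, h1, sub_eq_add_neg, fromBlocks_neg, fromBlocks_add, fromBlocks_multiply, fromBlocks_multiply, fromBlocks_add]
  simp [sub_eq_add_neg, Matrix.mul_assoc]

lemma minor_psd {C : Matrix n n ℝ} (hC : C.PosSemidef) (J : Finset n) :
    (1 + pj J * (C - 1) * pj J).PosSemidef := by
  have e : 1 + pj J * (C - 1) * pj J = diagonal (fun i => if i ∈ J then 0 else 1) + pj J * C * pj J := by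
    rw [mul_sub, sub_mul, mul_one, pj_mul]
    have : (1 : Matrix n n ℝ) = diagonal (fun i => if i ∈ J then 0 else 1) + pj J := by
      rw [pj, diagonal_add, ← diagonal_one]; congr 1; ext i; split_ifs <;> simp
    nth_rw 1 [this]; abel
  rw [e]
  refine PosSemidef.add (PosSemidef.diagonal ?_) (diag_psd hC _)
  intro i; simp only [Pi.zero_apply]; split_ifs <;> norm_num

lemma minor_antitone {A : Matrix n n ℝ} {B : Matrix n m ℝ} {D : Matrix m m ℝ}
    (h : (blk A B D 1).PosSemidef) (J : Finset (n ⊕ m)) :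
    AntitoneOn (fun t => minor (blk A B D t) J) (Set.Icc 0 1) := by
  obtain ⟨A', B', D', hh⟩ := minor_blk (A := A) (B := B) (D := D) J
  intro s hs t ht hst
  simp only [minor, hh]
  refine det_blk_antitone ?_ hs.1 hst ht.2
  rw [← hh]; exact minor_psd h J

lemma minor_diff {A : Matrix n n ℝ} {B : Matrix n m ℝ} {D : Matrix m m ℝ} (J : Finset (n ⊕ m)) :
    Differentiable ℝ (fun t => minor (blk A B D t) J) := by
  obtain ⟨A', B', D', hh⟩ := minor_blk (A := A) (B := B) (D := D) J
  simp only [minor, hh, det_apply]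
  refine Differentiable.fun_sum fun σ _ => Differentiable.const_smul ?_ _
  refine Differentiable.fun_finsetProd fun i _ => ?_
  rcases h1 : σ i with a | a <;> rcases i with b | b <;> simp [blk]


lemma det_one_add_eq {S : Matrix n n ℝ} (hS : S.PosSemidef) :
    (1 + S).det = ∏ i, (1 + hS.1.eigenvalues i) := by
  have h := congrArg (Polynomial.eval (-1 : ℝ)) hS.1.charpoly_eq
  rw [Matrix.eval_charpoly, Polynomial.eval_prod] at h
  have e : (Matrix.scalar n (-1 : ℝ) - S) = -(1 + S) := by
    rw [map_neg, map_one]; abel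
  rw [e, Matrix.det_neg] at h
  simp only [Polynomial.eval_sub, Polynomial.eval_X, Polynomial.eval_C, RCLike.ofReal_real_eq_id, id] at h
  have e2 : ∏ i, (-1 - hS.1.eigenvalues i) = (-1) ^ Fintype.card n * ∏ i, (1 + hS.1.eigenvalues i) := by
    rw [← Finset.card_univ, ← Finset.prod_const, ← Finset.prod_mul_distrib]
    refine Finset.prod_congr rfl fun i _ => by ring
  rw [e2] at h
  exact mul_left_cancel₀ (pow_ne_zero _ (by norm_num)) h

lemma gauss_one {v : ℝ} (hv : 0 ≤ v) :
    ∫ x, Real.exp (-(v * x ^ 2) / 2) ∂(gaussianReal 0 1) = (√(1 + v))⁻¹ := by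
  rw [integral_gaussianReal_eq_integral_smul one_ne_zero]
  have e : ∀ x : ℝ, gaussianPDFReal 0 1 x • Real.exp (-(v * x ^ 2) / 2)
      = (√(2 * Real.pi))⁻¹ * Real.exp (-((1 + v) / 2) * x ^ 2) := by
    intro x
    simp only [gaussianPDFReal, smul_eq_mul, NNReal.coe_one, mul_one, sub_zero]
    rw [mul_assoc, ← Real.exp_add]
    congr 2; ring
  simp_rw [e]
  rw [integral_const_mul, integral_gaussian]
  have hp := Real.pi_pos
  rw [show Real.pi / ((1 + v) / 2) = (2 * Real.pi) / (1 + v) by field_simp,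
    Real.sqrt_div (by positivity)]
  have : √(2 * Real.pi) ≠ 0 := by positivity
  field_simp

lemma quad_eigen {M : Matrix n n ℝ} (hM : M.PosSemidef) (x : n → ℝ) :
    let v := (∑ i, x i • hM.1.eigenvectorBasis i)
    (v : n → ℝ) ⬝ᵥ M *ᵥ v = ∑ i, hM.1.eigenvalues i * x i ^ 2 := by
  intro v
  have h1 : M *ᵥ (v : n → ℝ) =
      ((∑ i, (hM.1.eigenvalues i * x i) • hM.1.eigenvectorBasis i : EuclideanSpace ℝ n) : n → ℝ) := by
    have : (v : n → ℝ) = ∑ i, x i • (hM.1.eigenvectorBasis i : n → ℝ) := by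
      ext j; simp [v]
    rw [this, Matrix.mulVec_sum]
    ext j
    simp only [Matrix.mulVec_smul, hM.1.mulVec_eigenvectorBasis]
    simp [mul_comm, mul_left_comm]
  rw [h1]
  have h2 : (v : n → ℝ) ⬝ᵥ
      ((∑ i, (hM.1.eigenvalues i * x i) • hM.1.eigenvectorBasis i : EuclideanSpace ℝ n) : n → ℝ)
      = inner ℝ v (∑ i, (hM.1.eigenvalues i * x i) • hM.1.eigenvectorBasis i) := by
    simp only [PiLp.inner_apply, dotProduct]
    refine Finset.sum_congr rfl fun i _ => ?_
    simp [mul_comm]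
  rw [h2]
  have := (hM.1.eigenvectorBasis).orthonormal.inner_sum x (fun i => hM.1.eigenvalues i * x i) Finset.univ
  rw [this]
  refine Finset.sum_congr rfl fun i _ => ?_
  simp; ring

lemma gauss_quad {M : Matrix n n ℝ} (hM : M.PosSemidef) :
    ∫ g : n → ℝ, Real.exp (-(g ⬝ᵥ M *ᵥ g) / 2) ∂(Measure.pi fun _ => gaussianReal 0 1)
      = (√((1 + M).det))⁻¹ := by
  let F : EuclideanSpace ℝ n → ℝ := fun v => Real.exp (-((v : n → ℝ) ⬝ᵥ M *ᵥ v) / 2)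
  have hF : Continuous F := by
    simp only [F, dotProduct, mulVec]
    fun_prop
  have h1 : ∫ g : n → ℝ, Real.exp (-(g ⬝ᵥ M *ᵥ g) / 2) ∂(Measure.pi fun _ => gaussianReal 0 1)
      = ∫ v, F v ∂(stdGaussian (EuclideanSpace ℝ n)) := by
    rw [← map_pi_eq_stdGaussian, integral_map (by fun_prop) hF.aestronglyMeasurable]
  rw [h1, stdGaussian_eq_map_pi_orthonormalBasis hM.1.eigenvectorBasis,
    integral_map (Measurable.aemeasurable (by fun_prop)) hF.aestronglyMeasurable]
  have h2 : ∀ x : n → ℝ, F (∑ i, x i • hM.1.eigenvectorBasis i)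
      = ∏ i, Real.exp (-(hM.1.eigenvalues i * x i ^ 2) / 2) := by
    intro x
    simp only [F]
    rw [quad_eigen hM x, ← Real.exp_sum, ← Finset.sum_div, Finset.sum_neg_distrib]
  simp_rw [h2]
  rw [integral_fintype_prod_eq_prod (fun i (y : ℝ) => Real.exp (-(hM.1.eigenvalues i * y ^ 2) / 2)),
    det_one_add_eq hM, Real.sqrt_prod _ (fun i _ => by linarith [hM.eigenvalues_nonneg i]), ← Finset.prod_inv_distrib]
  exact Finset.prod_congr rfl fun i _ => gauss_one (hM.eigenvalues_nonneg i)

/-- Laplace transform of the squares of a centred Gaussian vector. -/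
lemma laplace {Ω : Type*} [MeasurableSpace Ω] (P : Measure Ω) [IsProbabilityMeasure P]
    (X : Ω → n → ℝ) (hXm : Measurable X) {C : Matrix n n ℝ} (hC : C.PosSemidef)
    (hX : ∀ t : n → ℝ, ∫ ω, Complex.exp (((t ⬝ᵥ X ω : ℝ) : ℂ) * Complex.I) ∂P
      = ((Real.exp (-(t ⬝ᵥ C *ᵥ t) / 2) : ℝ) : ℂ))
    (l : n → ℝ) (hl : ∀ i, 0 ≤ l i) :
    ∫ ω, Real.exp (-(∑ i, l i * X ω i ^ 2) / 2) ∂P = (√((1 + diagonal l * C).det))⁻¹ := by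
  let G : Measure (n → ℝ) := Measure.pi fun _ => gaussianReal 0 1
  let Φ : Ω → (n → ℝ) → ℂ := fun ω g =>
    Complex.exp ((((fun i => √(l i) * g i) ⬝ᵥ X ω : ℝ) : ℂ) * Complex.I)
  have hΦm : Measurable (Function.uncurry Φ) := by
    simp only [Φ, Function.uncurry_def, dotProduct]
    fun_prop
  have hint : Integrable (Function.uncurry Φ) (P.prod G) := by
    refine Integrable.of_bound hΦm.aestronglyMeasurable 1 (Filter.Eventually.of_forall fun x => ?_)
    simp only [Function.uncurry_def, Φ]
    rw [Complex.norm_exp_ofReal_mul_I]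
  have hsw := integral_integral_swap hint
  have hL : ∀ ω, ∫ g, Φ ω g ∂G = ((Real.exp (-(∑ i, l i * X ω i ^ 2) / 2) : ℝ) : ℂ) := by
    intro ω
    have h1 : ∀ g : n → ℝ, Φ ω g = ∏ i, Complex.exp (((√(l i) * X ω i : ℝ) : ℂ) * (g i : ℂ) * Complex.I) := by
      intro g
      simp only [Φ, dotProduct]
      rw [← Complex.exp_sum]
      congr 1
      push_cast
      rw [Finset.sum_mul]
      exact Finset.sum_congr rfl fun i _ => by ring
    simp_rw [h1]
    rw [integral_fintype_prod_eq_prod (fun i (y : ℝ) => Complex.exp (((√(l i) * X ω i : ℝ) : ℂ) * (y : ℂ) * Complex.I))]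
    have h2 : ∀ i, ∫ y : ℝ, Complex.exp (((√(l i) * X ω i : ℝ) : ℂ) * (y : ℂ) * Complex.I) ∂(gaussianReal 0 1)
        = Complex.exp (((-(l i * X ω i ^ 2) / 2 : ℝ)) : ℂ) := by
      intro i
      rw [← charFun_apply_real, charFun_gaussianReal]
      congr 1
      have : (√(l i) * X ω i) ^ 2 = l i * X ω i ^ 2 := by rw [mul_pow, Real.sq_sqrt (hl i)]
      rw [← Complex.ofReal_pow, this]
      push_cast; ring
    simp_rw [h2]
    rw [← Complex.exp_sum, Complex.ofReal_exp]
    congr 1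
    push_cast
    rw [← Finset.sum_div, Finset.sum_neg_distrib]
  have hR : ∀ g, ∫ ω, Φ ω g ∂P = ((Real.exp (-(g ⬝ᵥ (diagonal (fun i => √(l i)) * C *
      diagonal (fun i => √(l i))) *ᵥ g) / 2) : ℝ) : ℂ) := by
    intro g
    simp only [Φ]
    rw [hX]
    congr 4
    have : (fun i => √(l i) * g i) = diagonal (fun i => √(l i)) *ᵥ g := by
      ext i; rw [mulVec_diagonal]
    rw [this, ← mulVec_mulVec, ← mulVec_mulVec, dotProduct_mulVec g]
    congr 1
    ext i; rw [mulVec_diagonal, vecMul_diagonal, mul_comm]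
  simp_rw [hL, hR] at hsw
  rw [integral_complex_ofReal, integral_complex_ofReal, Complex.ofReal_inj, gauss_quad (diag_psd hC _),
    det_one_add_diag_mul hl] at hsw
  exact hsw


/-- `X` has the Laplace transform of squares of a Gaussian vector with covariance `C`. -/
def Rep {Ω : Type*} [MeasurableSpace Ω] (P : Measure Ω) (X : Ω → n → ℝ) (C : Matrix n n ℝ) : Prop :=
  ∀ l : n → ℝ, (∀ i, 0 ≤ l i) →
    ∫ ω, Real.exp (-(∑ i, l i * X ω i ^ 2) / 2) ∂P = (√((1 + diagonal l * C).det))⁻¹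

lemma rep_multivariate {C : Matrix n n ℝ} (hC : C.PosSemidef) :
    Rep (multivariateGaussian 0 C) (fun (ω : EuclideanSpace ℝ n) i => ω i) C := by
  refine laplace _ _ (by fun_prop) hC ?_
  intro t
  have h := charFun_multivariateGaussian (μ := 0) hC (WithLp.toLp 2 t)
  rw [charFun_apply] at h
  convert h using 1
  · refine integral_congr_ae (Filter.Eventually.of_forall fun ω => ?_)
    simp [PiLp.inner_apply, dotProduct]
  · simp [neg_div]

lemma sum_rep {Ω : Type*} [MeasurableSpace Ω] (P : Measure Ω) [IsProbabilityMeasure P]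
    (V : Ω → n → ℝ) (hVm : Measurable V) (hV : ∀ ω i, 0 ≤ V ω i) (N : ℕ) (b : n → ℕ → ℝ) :
    ∫ ω, ∏ i, ∑ k ∈ Finset.range N, b i k * Real.exp (-(V ω i) / 2) ^ k ∂P
      = ∑ k ∈ Fintype.piFinset (fun _ : n => Finset.range N), (∏ i, b i (k i)) *
        ∫ ω, Real.exp (-(∑ i, (k i : ℝ) * V ω i) / 2) ∂P := by
  have h1 : ∀ ω, ∏ i, ∑ k ∈ Finset.range N, b i k * Real.exp (-(V ω i) / 2) ^ k
      = ∑ k ∈ Fintype.piFinset (fun _ : n => Finset.range N), (∏ i, b i (k i)) *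
        Real.exp (-(∑ i, (k i : ℝ) * V ω i) / 2) := by
    intro ω
    rw [Finset.prod_univ_sum]
    refine Finset.sum_congr rfl fun k _ => ?_
    rw [Finset.prod_mul_distrib]
    congr 1
    simp_rw [← Real.exp_nat_mul]
    rw [← Real.exp_sum]
    congr 1
    rw [neg_div, Finset.sum_div, ← Finset.sum_neg_distrib]
    exact Finset.sum_congr rfl fun i _ => by ring
  simp_rw [h1]
  rw [integral_finsetSum]
  · exact Finset.sum_congr rfl fun k _ => integral_const_mul _ _
  · intro k _
    refine Integrable.const_mul ?_ _
    refine Integrable.of_bound (Measurable.aestronglyMeasurable (by fun_prop)) 1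
      (Filter.Eventually.of_forall fun ω => ?_)
    rw [Real.norm_eq_abs, abs_of_pos (Real.exp_pos _), Real.exp_le_one_iff]
    have : 0 ≤ ∑ i, (k i : ℝ) * V ω i :=
      Finset.sum_nonneg fun i _ => mul_nonneg (Nat.cast_nonneg _) (hV ω i)
    linarith

/-- The polynomial functional in terms of the covariance. -/
noncomputable def Psi (N : ℕ) (b : n → ℕ → ℝ) (C : Matrix n n ℝ) (e : ℕ) : ℝ :=
  ∑ k ∈ Fintype.piFinset (fun _ : n => Finset.range N), (∏ i, b i (k i)) *
        (√((1 + diagonal (fun i => (k i : ℝ)) * C).det))⁻¹ ^ e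

lemma Rep.psi_one {Ω : Type*} [MeasurableSpace Ω] {P : Measure Ω} [IsProbabilityMeasure P]
    {X : Ω → n → ℝ} {C : Matrix n n ℝ} (h : Rep P X C) (hX : Measurable X) (N : ℕ) (b : n → ℕ → ℝ) :
    ∫ ω, ∏ i, ∑ k ∈ Finset.range N, b i k * Real.exp (-(X ω i ^ 2) / 2) ^ k ∂P = Psi N b C 1 := by
  rw [sum_rep P (fun ω i => X ω i ^ 2) (by fun_prop) (fun _ _ => sq_nonneg _), Psi]
  refine Finset.sum_congr rfl fun k _ => ?_
  rw [h _ (fun i => Nat.cast_nonneg _), pow_one]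

lemma Rep.psi_three {Ω : Type*} [MeasurableSpace Ω] {P : Measure Ω} [IsProbabilityMeasure P]
    {X : Ω → n → ℝ} {C : Matrix n n ℝ} (h : Rep P X C) (hX : Measurable X) (N : ℕ) (b : n → ℕ → ℝ) :
    ∫ ω : Ω × (Ω × Ω), ∏ i, ∑ k ∈ Finset.range N, b i k *
      Real.exp (-(X ω.1 i ^ 2 + X ω.2.1 i ^ 2 + X ω.2.2 i ^ 2) / 2) ^ k ∂(P.prod (P.prod P))
        = Psi N b C 3 := by
  rw [sum_rep (P.prod (P.prod P)) (fun ω i => X ω.1 i ^ 2 + X ω.2.1 i ^ 2 + X ω.2.2 i ^ 2)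
    (by fun_prop) (fun _ _ => by positivity), Psi]
  refine Finset.sum_congr rfl fun k _ => ?_
  congr 1
  have hk := h _ (fun i => Nat.cast_nonneg (k i))
  let f : Ω → ℝ := fun ω => Real.exp (-(∑ i, (k i : ℝ) * X ω i ^ 2) / 2)
  have e : ∀ ω : Ω × (Ω × Ω), Real.exp (-(∑ i, (k i : ℝ) * (X ω.1 i ^ 2 + X ω.2.1 i ^ 2 + X ω.2.2 i ^ 2)) / 2)
      = f ω.1 * (fun z : Ω × Ω => f z.1 * f z.2) ω.2 := by
    intro ω
    simp only [f]
    rw [← Real.exp_add, ← Real.exp_add]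
    congr 1
    simp_rw [mul_add, Finset.sum_add_distrib]
    ring
  simp_rw [e]
  rw [integral_prod_mul f (fun z : Ω × Ω => f z.1 * f z.2), integral_prod_mul f f]
  simp only [f]
  rw [hk]; ring

lemma psi_three_nonneg {C : Matrix n n ℝ} (hC : C.PosSemidef) (N : ℕ) (b : n → ℕ → ℝ)
    (hb : ∀ i, ∀ u : ℝ, 0 ≤ u → u ≤ 1 → 0 ≤ ∑ k ∈ Finset.range N, b i k * u ^ k) :
    0 ≤ Psi N b C 3 := by
  rw [← (rep_multivariate hC).psi_three (by fun_prop)]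
  refine integral_nonneg fun ω => Finset.prod_nonneg fun i _ => hb i _ (Real.exp_pos _).le ?_
  rw [Real.exp_le_one_iff]
  have := sq_nonneg (ω.1 i)
  have := sq_nonneg (ω.2.1 i)
  have := sq_nonneg (ω.2.2 i)
  linarith

lemma psi_mono {A : Matrix n n ℝ} {B : Matrix n m ℝ} {D : Matrix m m ℝ}
    (h : (blk A B D 1).PosSemidef) (N : ℕ) (a : ℕ → ℝ)
    (h0 : ∀ u : ℝ, 0 ≤ u → u ≤ 1 → 0 ≤ ∑ k ∈ Finset.range N, a k * u ^ k)
    (h1 : ∀ u : ℝ, 0 ≤ u → u ≤ 1 → 0 ≤ ∑ k ∈ Finset.range N, a k * k * u ^ k) :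
    Psi N (fun _ => a) (blk A B D 0) 1 ≤ Psi N (fun _ => a) (blk A B D 1) 1 := by
  let mn : ℝ → Finset (n ⊕ m) → ℝ := fun t J => minor (blk A B D t) J
  let md : ℝ → Finset (n ⊕ m) → ℝ := fun t J => deriv (fun s => minor (blk A B D s) J) t
  have hmd : ∀ t J, HasDerivAt (fun s => mn s J) (md t J) t := fun t J =>
    (minor_diff J t).hasDerivAt
  have hmd0 : ∀ t ∈ Set.Ioo (0:ℝ) 1, ∀ J, md t J ≤ 0 := by
    intro t ht J
    have := (minor_antitone h J).derivWithin_nonpos (x := t)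
    rwa [derivWithin_of_mem_nhds (Icc_mem_nhds ht.1 ht.2)] at this
  let bJ : Finset (n ⊕ m) → (n ⊕ m) → ℕ → ℝ := fun J i k => a k * (if i ∈ J then (k : ℝ) else 1)
  have hpos : ∀ t ∈ Set.Icc (0:ℝ) 1, ∀ k : n ⊕ m → ℕ,
      0 < ∑ J : Finset (n ⊕ m), (∏ i ∈ J, (k i : ℝ)) * mn t J := by
    intro t ht k
    have := one_le_det (blk_psd h ht.1 ht.2) (fun i => Nat.cast_nonneg (α := ℝ) (k i))
    rw [det_expand] at this
    linarith
  have hder : ∀ t ∈ Set.Icc (0:ℝ) 1, HasDerivAt (fun s => Psi N (fun _ => a) (blk A B D s) 1)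
      (∑ J, (-(1 / 2) * md t J) * Psi N (bJ J) (blk A B D t) 3) t := by
    intro t ht
    have hk : ∀ k ∈ Fintype.piFinset (fun _ : n ⊕ m => Finset.range N),
        HasDerivAt (fun s => (∏ i, a (k i)) *
        (√((1 + diagonal (fun i => (k i : ℝ)) * blk A B D s).det))⁻¹ ^ 1)
        ((∏ i, a (k i)) * (-(1 / 2) * (∑ J : Finset (n ⊕ m), (∏ i ∈ J, (k i : ℝ)) * md t J) *
         (√((1 + diagonal (fun i => (k i : ℝ)) * blk A B D t).det))⁻¹ ^ 3)) t := by
      intro k _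
      simp only [pow_one, det_expand]
      refine HasDerivAt.const_mul _ ?_
      have hS : HasDerivAt (fun s => ∑ J : Finset (n ⊕ m), (∏ i ∈ J, (k i : ℝ)) * mn s J)
          (∑ J : Finset (n ⊕ m), (∏ i ∈ J, (k i : ℝ)) * md t J) t :=
        HasDerivAt.fun_sum fun J _ => (hmd t J).const_mul _
      have hp := hpos t ht k
      have hs := Real.sqrt_pos.mpr hp
      have := (hS.sqrt hp.ne').fun_inv hs.ne'
      convert this using 1
      simp only [mn] at hs ⊢
      field_simp
    have := HasDerivAt.fun_sum hk
    refine HasDerivAt.congr_deriv this (Eq.symm ?_)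
    unfold Psi
    simp only [Finset.mul_sum, Finset.sum_mul]
    rw [Finset.sum_comm]
    refine Finset.sum_congr rfl fun k _ => Finset.sum_congr rfl fun J _ => ?_
    have e : ∏ i, bJ J i (k i) = (∏ i, a (k i)) * ∏ i ∈ J, (k i : ℝ) := by
      simp only [bJ, Finset.prod_mul_distrib]
      congr 1
      rw [Finset.prod_ite_mem, Finset.univ_inter]
    rw [e]; ring
  have hmono : MonotoneOn (fun s => Psi N (fun _ => a) (blk A B D s) 1) (Set.Icc 0 1) := by
    apply monotoneOn_of_deriv_nonneg (convex_Icc 0 1)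
    · exact fun t ht => (hder t ht).continuousAt.continuousWithinAt
    · intro t ht
      rw [interior_Icc] at ht
      exact (hder t ⟨ht.1.le, ht.2.le⟩).differentiableAt.differentiableWithinAt
    · intro t ht
      rw [interior_Icc] at ht
      rw [(hder t ⟨ht.1.le, ht.2.le⟩).deriv]
      refine Finset.sum_nonneg fun J _ => mul_nonneg ?_ ?_
      · linarith [hmd0 t ht J]
      · refine psi_three_nonneg (blk_psd h ht.1.le ht.2.le) N _ fun i u hu0 hu1 => ?_
        by_cases hi : i ∈ J
        · simpa [bJ, hi] using h1 u hu0 hu1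
        · simpa [bJ, hi] using h0 u hu0 hu1
  exact hmono (by simp) (by simp) zero_le_one


section banach

variable {E : Type*} [NormedAddCommGroup E] [NormedSpace ℝ E] [MeasurableSpace E] [BorelSpace E]

/-- covariance matrix of a family of functionals -/
noncomputable def cov (μ : Measure E) (f : n → E →L[ℝ] ℝ) : Matrix n n ℝ :=
  Matrix.of fun i j => ∫ x, f i x * f j x ∂μ

lemma memLp_of_gauss {μ : Measure E}
    (hGauss : ∀ L : E →L[ℝ] ℝ, ∃ v : NNReal, μ.map L = gaussianReal 0 v) (L : E →L[ℝ] ℝ) :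
    MemLp L 2 μ := by
  obtain ⟨v, hv⟩ := hGauss L
  have h : MemLp id 2 (μ.map L) := by
    rw [hv]; exact memLp_id_gaussianReal' 2 (by norm_num)
  exact h.comp_of_map (by fun_prop)

lemma cov_quad {μ : Measure E}
    (hGauss : ∀ L : E →L[ℝ] ℝ, ∃ v : NNReal, μ.map L = gaussianReal 0 v) (f : n → E →L[ℝ] ℝ)
    (t : n → ℝ) : t ⬝ᵥ cov μ f *ᵥ t = ∫ x, (∑ i, t i * f i x) ^ 2 ∂μ := by
  have hint : ∀ i j, Integrable (fun x => f i x * f j x) μ := fun i j =>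
    (memLp_of_gauss hGauss (f i)).integrable_mul (memLp_of_gauss hGauss (f j))
  have e : ∀ x, (∑ i, t i * f i x) ^ 2 = ∑ i, ∑ j, t i * t j * (f i x * f j x) := by
    intro x
    rw [sq, Finset.sum_mul_sum]
    exact Finset.sum_congr rfl fun i _ => Finset.sum_congr rfl fun j _ => by ring
  simp_rw [e]
  rw [integral_finsetSum _ fun i _ => integrable_finsetSum _ fun j _ => (hint i j).const_mul _]
  simp only [dotProduct, mulVec, cov, Matrix.of_apply]
  refine Finset.sum_congr rfl fun i _ => ?_
  rw [integral_finsetSum _ fun j _ => (hint i j).const_mul _, Finset.mul_sum]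
  refine Finset.sum_congr rfl fun j _ => ?_
  rw [integral_const_mul]; ring

lemma cov_psd {μ : Measure E}
    (hGauss : ∀ L : E →L[ℝ] ℝ, ∃ v : NNReal, μ.map L = gaussianReal 0 v) (f : n → E →L[ℝ] ℝ) :
    (cov μ f).PosSemidef := by
  refine .of_dotProduct_mulVec_nonneg ?_ ?_
  · ext i j; simp [cov, mul_comm]
  · intro x
    rw [star_trivial, cov_quad hGauss]
    exact integral_nonneg fun x => sq_nonneg _

lemma rep_cov {μ : Measure E} [IsProbabilityMeasure μ]
    (hGauss : ∀ L : E →L[ℝ] ℝ, ∃ v : NNReal, μ.map L = gaussianReal 0 v) (f : n → E →L[ℝ] ℝ) :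
    Rep μ (fun x i => f i x) (cov μ f) := by
  refine laplace _ _ (by fun_prop) (cov_psd hGauss f) ?_
  intro t
  let L : E →L[ℝ] ℝ := ∑ i, t i • f i
  have hL : ∀ x, L x = ∑ i, t i * f i x := fun x => by simp [L]
  obtain ⟨v, hv⟩ := hGauss L
  have hvar : t ⬝ᵥ cov μ f *ᵥ t = v := by
    rw [cov_quad hGauss]
    simp_rw [← hL]
    rw [← variance_id_gaussianReal (μ := 0) (v := v), variance_of_integral_eq_zero (by fun_prop) (by simp), ← hv,
      integral_map (by fun_prop) (Measurable.aestronglyMeasurable (by fun_prop))]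
    rfl
  rw [hvar]
  have h1 := charFun_gaussianReal (μ := 0) (v := v) 1
  rw [charFun_apply_real, ← hv, integral_map (by fun_prop) (Measurable.aestronglyMeasurable (by fun_prop))] at h1
  convert h1 using 1
  · refine integral_congr_ae (Filter.Eventually.of_forall fun x => ?_)
    simp [hL, dotProduct]
  · simp [neg_div]

lemma rep_prod {μ : Measure E} [IsProbabilityMeasure μ] {X : E → n → ℝ} {Y : E → m → ℝ}
    {A : Matrix n n ℝ} (B : Matrix n m ℝ) {D : Matrix m m ℝ} (hA : Rep μ X A) (hD : Rep μ Y D) 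
    (hAp : A.PosSemidef) :
    Rep (μ.prod μ) (fun z : E × E => Sum.elim (X z.1) (Y z.2)) (blk A B D 0) := by
  intro l hl
  let f : E → ℝ := fun ω => Real.exp (-(∑ i, l (Sum.inl i) * X ω i ^ 2) / 2)
  let g : E → ℝ := fun ω => Real.exp (-(∑ i, l (Sum.inr i) * Y ω i ^ 2) / 2)
  have e : ∀ z : E × E, Real.exp (-(∑ i, l i * (Sum.elim (X z.1) (Y z.2)) i ^ 2) / 2)
      = f z.1 * g z.2 := by
    intro z
    simp only [f, g]
    rw [← Real.exp_add, Fintype.sum_sum_type]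
    congr 1
    simp only [Sum.elim_inl, Sum.elim_inr]; ring
  simp_rw [e]
  rw [integral_prod_mul f g]
  simp only [f, g]
  rw [hA _ (fun i => hl _), hD _ (fun i => hl _), ← mul_inv, ← Real.sqrt_mul]
  · congr 2
    have hd : diagonal l = fromBlocks (diagonal fun i => l (Sum.inl i)) 0 0 (diagonal fun i => l (Sum.inr i)) := by
      rw [fromBlocks_diagonal]; congr 1; ext i; cases i <;> rfl
    rw [hd, blk, fromBlocks_multiply, ← fromBlocks_one, fromBlocks_add]
    simp
  · exact zero_le_one.trans (one_le_det hAp (fun i => hl _))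

lemma gci_poly {μ : Measure E} [IsProbabilityMeasure μ]
    (hGauss : ∀ L : E →L[ℝ] ℝ, ∃ v : NNReal, μ.map L = gaussianReal 0 v)
    (f : n → E →L[ℝ] ℝ) (g : m → E →L[ℝ] ℝ) [SecondCountableTopology E] (p : Polynomial ℝ)
    (h0 : ∀ u : ℝ, 0 ≤ u → u ≤ 1 → 0 ≤ p.eval u)
    (h1 : ∀ u : ℝ, 0 ≤ u → u ≤ 1 → 0 ≤ p.derivative.eval u) :
    (∫ x, ∏ i, p.eval (Real.exp (-(f i x ^ 2) / 2)) ∂μ) *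
      (∫ x, ∏ i, p.eval (Real.exp (-(g i x ^ 2) / 2)) ∂μ) ≤
    ∫ x, (∏ i, p.eval (Real.exp (-(f i x ^ 2) / 2))) *
      (∏ i, p.eval (Real.exp (-(g i x ^ 2) / 2))) ∂μ := by
  let B : Matrix n m ℝ := Matrix.of fun i j => ∫ x, f i x * g j x ∂μ
  have hb : cov μ (Sum.elim f g) = blk (cov μ f) B (cov μ g) 1 := by
    ext i j
    rcases i with i | i <;> rcases j with j | j <;> simp [cov, blk, B, mul_comm]
  have hp : (blk (cov μ f) B (cov μ g) 1).PosSemidef := by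
    rw [← hb]; exact cov_psd hGauss _
  have hu : ∀ u : ℝ, ∑ k ∈ Finset.range (p.natDegree + 1), p.coeff k * k * u ^ k
      = u * p.derivative.eval u := by
    intro u
    rw [Polynomial.derivative_eval, Polynomial.sum_over_range _ (by simp), Finset.mul_sum]
    refine Finset.sum_congr rfl fun k _ => ?_
    rcases k with _ | k
    · simp
    · simp; ring
  have hm := psi_mono hp (p.natDegree + 1) p.coeff
    (fun u hu0 hu1 => by rw [← Polynomial.eval_eq_sum_range]; exact h0 u hu0 hu1)
    (fun u hu0 hu1 => by rw [hu]; exact mul_nonneg hu0 (h1 u hu0 hu1))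
  have hr1 := rep_cov hGauss (Sum.elim f g)
  rw [hb] at hr1
  rw [← hr1.psi_one (by fun_prop), ← (rep_prod B (rep_cov hGauss f) (rep_cov hGauss g)
    (cov_psd hGauss f)).psi_one] at hm
  · simp only [← Polynomial.eval_eq_sum_range, Fintype.prod_sum_type, Sum.elim_inl, Sum.elim_inr] at hm
    rw [integral_prod_mul (fun x => ∏ i, p.eval (Real.exp (-(f i x ^ 2) / 2)))
      (fun x => ∏ i, p.eval (Real.exp (-(g i x ^ 2) / 2)))] at hm
    exact hm
  · refine measurable_pi_iff.mpr fun i => ?_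
    rcases i with i | i <;> simp <;> fun_prop

/-- polynomials approximating the indicator of `[1/2, 1]` -/
noncomputable def ap (M : ℕ) : Polynomial ℝ := 1 - (1 - Polynomial.X ^ M) ^ (M * 2 ^ M)

lemma ap_eval (M : ℕ) (u : ℝ) : (ap M).eval u = 1 - (1 - u ^ M) ^ (M * 2 ^ M) := by
  simp [ap]

lemma ap_nonneg (M : ℕ) (u : ℝ) (h0 : 0 ≤ u) (h1 : u ≤ 1) : 0 ≤ (ap M).eval u := by
  rw [ap_eval, sub_nonneg]
  have : u ^ M ≤ 1 := pow_le_one₀ h0 h1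
  have : 0 ≤ u ^ M := pow_nonneg h0 M
  exact pow_le_one₀ (by linarith) (by linarith)

lemma ap_le_one (M : ℕ) (u : ℝ) (h0 : 0 ≤ u) (h1 : u ≤ 1) : (ap M).eval u ≤ 1 := by
  rw [ap_eval]
  have : u ^ M ≤ 1 := pow_le_one₀ h0 h1
  have : 0 ≤ (1 - u ^ M) ^ (M * 2 ^ M) := pow_nonneg (by linarith) _
  linarith

lemma ap_deriv (M : ℕ) (u : ℝ) (h0 : 0 ≤ u) (h1 : u ≤ 1) : 0 ≤ (ap M).derivative.eval u := by
  have : u ^ M ≤ 1 := pow_le_one₀ h0 h1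
  have h2 : 0 ≤ 1 - u ^ M := by linarith
  simp only [ap, Polynomial.derivative_sub, Polynomial.derivative_one, Polynomial.derivative_pow,
    Polynomial.derivative_X, Polynomial.eval_sub, Polynomial.eval_mul, Polynomial.eval_pow,
    Polynomial.eval_one, Polynomial.eval_X, Polynomial.eval_zero, Polynomial.eval_C, zero_sub,
    Polynomial.eval_neg, mul_neg, neg_neg, mul_one]
  positivity

lemma ap_tendsto (u : ℝ) (h0 : 0 ≤ u) (h1 : u ≤ 1) :
    Filter.Tendsto (fun M => (ap M).eval u) Filter.atTop (nhds (if 1 / 2 ≤ u then 1 else 0)) := by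
  split_ifs with h
  · have hlow : ∀ M : ℕ, 1 - Real.exp (-(M : ℝ)) ≤ (ap M).eval u := by
      intro M
      rw [ap_eval]
      have hu1 : u ^ M ≤ 1 := pow_le_one₀ h0 h1
      have a1 : (1 - u ^ M) ^ (M * 2 ^ M) ≤ Real.exp (-(u ^ M)) ^ (M * 2 ^ M) :=
        pow_le_pow_left₀ (by linarith) (Real.one_sub_le_exp_neg _) _
      have a2 : Real.exp (-(u ^ M)) ^ (M * 2 ^ M) ≤ Real.exp (-(M : ℝ)) := by
        rw [← Real.exp_nat_mul, Real.exp_le_exp]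
        push_cast
        have : 1 ≤ (2 : ℝ) ^ M * u ^ M := by
          rw [← mul_pow]; exact one_le_pow₀ (by linarith)
        have := mul_le_mul_of_nonneg_left this (Nat.cast_nonneg (α := ℝ) M)
        linarith
      linarith
    refine tendsto_of_tendsto_of_tendsto_of_le_of_le ?_ tendsto_const_nhds hlow
      (fun M => ap_le_one M u h0 h1)
    have : Filter.Tendsto (fun M : ℕ => Real.exp (-(M : ℝ))) Filter.atTop (nhds 0) :=
      Real.tendsto_exp_neg_atTop_nhds_zero.comp tendsto_natCast_atTop_atTop
    simpa using this.const_sub 1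
  · push Not at h
    have hup : ∀ M : ℕ, (ap M).eval u ≤ M * (2 * u) ^ M := by
      intro M
      rw [ap_eval]
      have hu1 : u ^ M ≤ 1 := pow_le_one₀ h0 h1
      have := one_add_mul_le_pow (a := -(u ^ M)) (by linarith) (M * 2 ^ M)
      push_cast at this
      rw [mul_pow]
      rw [sub_eq_add_neg 1 (u ^ M)]
      nlinarith
    refine tendsto_of_tendsto_of_tendsto_of_le_of_le tendsto_const_nhds ?_
      (fun M => ap_nonneg M u h0 h1) hup
    exact tendsto_self_mul_const_pow_of_lt_one (by linarith) (by linarith)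

lemma exp_scale (y : ℝ) : 1 / 2 ≤ Real.exp (-((√(2 * Real.log 2) * y) ^ 2) / 2) ↔ |y| ≤ 1 := by
  have hl : 0 < Real.log 2 := Real.log_pos (by norm_num)
  rw [mul_pow, Real.sq_sqrt (by positivity), ← Real.log_le_iff_le_exp (by norm_num),
    show (1 / 2 : ℝ) = 2⁻¹ by norm_num, Real.log_inv, ← sq_le_one_iff_abs_le_one]
  constructor
  · intro h; nlinarith
  · intro h; nlinarith

lemma limit_int {μ : Measure E} [IsProbabilityMeasure μ] (f : n → E →L[ℝ] ℝ) :
    Filter.Tendsto (fun M => ∫ x, ∏ i, (ap M).eval (Real.exp (-((√(2 * Real.log 2) * f i x) ^ 2) / 2)) ∂μ)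
      Filter.atTop (nhds (μ.real {x | ∀ i, |f i x| ≤ 1})) := by
  have hms : MeasurableSet {x | ∀ i, |f i x| ≤ 1} := by
    simp only [Set.ofPred_forall]
    exact MeasurableSet.iInter fun i => measurableSet_le (by fun_prop) (by fun_prop)
  have hexp : ∀ y : ℝ, Real.exp (-(y ^ 2) / 2) ≤ 1 := fun y => by
    rw [Real.exp_le_one_iff]; have := sq_nonneg y; linarith
  rw [← integral_indicator_one hms]
  refine tendsto_integral_of_dominated_convergence (fun _ => 1) ?_ (integrable_const _) ?_ ?_
  · intro M
    refine Measurable.aestronglyMeasurable ?_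
    simp only [ap_eval]
    fun_prop
  · intro M
    refine Filter.Eventually.of_forall fun x => ?_
    rw [Real.norm_eq_abs, abs_of_nonneg (Finset.prod_nonneg fun i _ =>
      ap_nonneg M _ (Real.exp_pos _).le (hexp _))]
    exact Finset.prod_le_one (fun i _ => ap_nonneg M _ (Real.exp_pos _).le (hexp _))
      (fun i _ => ap_le_one M _ (Real.exp_pos _).le (hexp _))
  · refine Filter.Eventually.of_forall fun x => ?_
    have h := tendsto_finsetProd (Finset.univ : Finset n) (fun i _ => ap_tendsto
      (Real.exp (-((√(2 * Real.log 2) * f i x) ^ 2) / 2)) (Real.exp_pos _).le (hexp _))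
    convert h using 2
    simp only [exp_scale]
    by_cases hx : ∀ i, |f i x| ≤ 1
    · simp [Set.indicator, hx]
    · simp only [Set.indicator, Set.mem_ofPred_eq, hx, if_false]
      push Not at hx
      obtain ⟨i, hi⟩ := hx
      exact (Finset.prod_eq_zero (Finset.mem_univ i) (if_neg (not_le.mpr hi))).symm

lemma gci_finite {μ : Measure E} [IsProbabilityMeasure μ]
    (hGauss : ∀ L : E →L[ℝ] ℝ, ∃ v : NNReal, μ.map L = gaussianReal 0 v)
    (f : n → E →L[ℝ] ℝ) (g : m → E →L[ℝ] ℝ) [SecondCountableTopology E] :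
    μ {x | ∀ i, |f i x| ≤ 1} * μ {x | ∀ i, |g i x| ≤ 1} ≤
      μ ({x | ∀ i, |f i x| ≤ 1} ∩ {x | ∀ i, |g i x| ≤ 1}) := by
  have hreal : μ.real {x | ∀ i, |f i x| ≤ 1} * μ.real {x | ∀ i, |g i x| ≤ 1} ≤
      μ.real {x | ∀ i, |(Sum.elim f g) i x| ≤ 1} := by
    refine le_of_tendsto_of_tendsto' ((limit_int f).mul (limit_int g)) (limit_int (Sum.elim f g)) ?_
    intro M
    have := gci_poly hGauss (fun i => √(2 * Real.log 2) • f i) (fun i => √(2 * Real.log 2) • g i)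
      (ap M) (ap_nonneg M) (ap_deriv M)
    simpa [Fintype.prod_sum_type] using this
  have hs : {x | ∀ i, |(Sum.elim f g) i x| ≤ 1} =
      {x | ∀ i, |f i x| ≤ 1} ∩ {x | ∀ i, |g i x| ≤ 1} := by
    ext x; simp
  rw [hs] at hreal
  simp only [Measure.real] at hreal
  rw [← ENNReal.toReal_mul] at hreal
  exact (ENNReal.toReal_le_toReal (ENNReal.mul_ne_top (measure_ne_top _ _) (measure_ne_top _ _))
    (measure_ne_top _ _)).mp hreal

lemma exists_seq [SecondCountableTopology E] {K : Set E} (hKc : IsClosed K) (hKconv : Convex ℝ K)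
    (hKsym : K = -K) (hne : K.Nonempty) :
    ∃ f : ℕ → E →L[ℝ] ℝ, K = ⋂ k : ℕ, {x | ∀ i : Fin k, |f i x| ≤ 1} := by
  have hneg : ∀ x ∈ K, -x ∈ K := fun x hx => by rw [hKsym] at hx; exact hx
  have h0 : (0 : E) ∈ K := by
    obtain ⟨x, hx⟩ := hne
    have := hKconv hx (hneg x hx) (show (0:ℝ) ≤ 1 / 2 by norm_num) (show (0:ℝ) ≤ 1 / 2 by norm_num)
      (by norm_num)
    simpa using this
  let I := {f : E →L[ℝ] ℝ // ∀ x ∈ K, |f x| ≤ 1}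
  obtain ⟨T, hTc, hT⟩ := TopologicalSpace.isOpen_iUnion_countable
    (fun f : I => {x : E | 1 < |f.1 x|}) (fun f => isOpen_lt continuous_const f.1.continuous.abs)
  have hun : ∀ x, x ∉ K → ∃ f : I, 1 < |f.1 x| := by
    intro x hx
    obtain ⟨f, u, hf, hux⟩ := geometric_hahn_banach_closed_point hKconv hKc hx
    have hu : 0 < u := by simpa using hf 0 h0
    refine ⟨⟨u⁻¹ • f, fun y hy => ?_⟩, ?_⟩
    · have h1 := hf y hy
      have h2 := hf (-y) (hneg y hy)
      rw [map_neg] at h2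
      have : |f y| ≤ u := abs_le.mpr ⟨by linarith, h1.le⟩
      simp only [_root_.smul_apply, smul_eq_mul, abs_mul, abs_inv, abs_of_pos hu]
      rw [inv_mul_le_iff₀ hu]; linarith
    · simp only [_root_.smul_apply, smul_eq_mul, abs_mul, abs_inv, abs_of_pos hu]
      rw [lt_inv_mul_iff₀ hu, mul_one]
      exact hux.trans_le (le_abs_self _)
  obtain ⟨F, hF⟩ := (hTc.insert (⟨0, by simp⟩ : I)).exists_eq_range (Set.insert_nonempty _ _)
  refine ⟨fun k => (F k).1, ?_⟩
  ext x
  simp only [Set.mem_iInter, Set.mem_ofPred_eq]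
  constructor
  · intro hx k i
    exact (F i).2 x hx
  · intro h
    by_contra hx
    obtain ⟨f, hf⟩ := hun x hx
    have : x ∈ ⋃ f : I, {x : E | 1 < |f.1 x|} := Set.mem_iUnion.mpr ⟨f, hf⟩
    rw [← hT] at this
    simp only [Set.mem_iUnion, Set.mem_ofPred_eq] at this
    obtain ⟨g, hg, hgx⟩ := this
    have : g ∈ Set.range F := by rw [← hF]; exact Set.mem_insert_of_mem _ hg
    obtain ⟨k, rfl⟩ := this
    have := h (k + 1) ⟨k, Nat.lt_succ_self k⟩
    simp only at this
    linarith

end banach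

end GCI

/-- the Gaussian correlation inequality on a separable Banach space:
for a centred Gaussian Borel measure `μ` (every continuous linear functional has a
centred Gaussian distribution) and closed, convex, symmetric sets `K, L`,
`μ(K ∩ L) ≥ μ(K) μ(L)`. -/
theorem stmt2 {E : Type*} [NormedAddCommGroup E] [NormedSpace ℝ E] [CompleteSpace E]
    [TopologicalSpace.SeparableSpace E] [MeasurableSpace E] [BorelSpace E]
    (μ : Measure E) [IsProbabilityMeasure μ]
    (hGauss : ∀ L : E →L[ℝ] ℝ, ∃ v : NNReal, μ.map L = gaussianReal 0 v)
    (K L : Set E) (hKc : IsClosed K) (hKconv : Convex ℝ K) (hKsym : K = -K)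
    (hLc : IsClosed L) (hLconv : Convex ℝ L) (hLsym : L = -L) :
    μ K * μ L ≤ μ (K ∩ L) := by
  have : SecondCountableTopology E := UniformSpace.secondCountable_of_separable E
  rcases K.eq_empty_or_nonempty with hK0 | hK0
  · simp [hK0]
  rcases L.eq_empty_or_nonempty with hL0 | hL0
  · simp [hL0]
  obtain ⟨f, hf⟩ := GCI.exists_seq hKc hKconv hKsym hK0
  obtain ⟨g, hg⟩ := GCI.exists_seq hLc hLconv hLsym hL0
  let S : (ℕ → E →L[ℝ] ℝ) → ℕ → Set E := fun f k => {x | ∀ i : Fin k, |f i x| ≤ 1}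
  have hSc : ∀ f k, MeasurableSet (S f k) := by
    intro f k
    simp only [S, Set.ofPred_forall]
    exact MeasurableSet.iInter fun i => measurableSet_le (by fun_prop) (by fun_prop)
  have hSa : ∀ f, Antitone (S f) := by
    intro f j k hjk x hx i
    exact hx ⟨i, i.2.trans_le hjk⟩
  have hlim : ∀ T : ℕ → Set E, (∀ k, MeasurableSet (T k)) → Antitone T →
      Filter.Tendsto (fun k => μ (T k)) Filter.atTop (nhds (μ (⋂ k, T k))) := by
    intro T hT hTa
    exact tendsto_measure_iInter_atTop (fun k => (hT k).nullMeasurableSet) hTa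
      ⟨0, measure_ne_top _ _⟩
  have hKL : K ∩ L = ⋂ k, (S f k ∩ S g k) := by
    rw [Set.iInter_inter_distrib, hf, hg]
  rw [hKL, hf, hg]
  refine le_of_tendsto_of_tendsto'
    (ENNReal.Tendsto.mul (hlim (S f) (hSc f) (hSa f)) (Or.inr (measure_ne_top _ _))
      (hlim (S g) (hSc g) (hSa g)) (Or.inr (measure_ne_top _ _)))
    (hlim (fun k => S f k ∩ S g k) (fun k => (hSc f k).inter (hSc g k))
      (fun j k h => Set.inter_subset_inter (hSa f h) (hSa g h))) ?_
  intro k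
  exact GCI.gci_finite hGauss (fun i : Fin k => f i) (fun i : Fin k => g i)
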